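/- Let 0 ≤ α < 1, let μ ≤ (1−α)²/4, set ν = (2/(2−α))·√((1−α)²/4 − μ), and let j > 0. Define Φ(x) = x^{(1−α)/2} · J_ν(j · x^{(2−α)/2}) for x ∈ (0,1). Then Φ is twice differentiable on (0,1), the function x ↦ x^α Φ′(x) is differentiable on (0,1), and for all x ∈ (0,1) one has −(d/dx)(x^α Φ′(x)) − (μ / x^{2−α}) Φ(x) = ((2−α)/2)² · j² · Φ(x). -/

import Mathlib

/-- The Bessel function of the first kind of order `ν`, defined by its power series:
`J_ν(x) = ∑_{m=0}^∞ ((-1)^m / (m! Γ(m+ν+1))) (x/2)^(2m+ν)`. -/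
noncomputable def besselJ (ν : ℝ) (x : ℝ) : ℝ :=
  ∑' m : ℕ, ((-1 : ℝ) ^ m / ((m.factorial : ℝ) * Real.Gamma ((m : ℝ) + ν + 1))) *
    (x / 2) ^ (2 * (m : ℝ) + ν)

/-!
The ladder relations `J_ν' = (ν / x) J_ν - J_{ν+1}` and `J_{ν+1}' = J_ν - ((ν + 1) / x) J_{ν+1}`
differentiate `x ^ r J_ν(j x ^ q)` within the family of such products. With `r = (1 - α) / 2` and
`q = (2 - α) / 2`, the flux is
`x ^ α Φ' = (r + q ν) x ^ (-r) J_ν(j x ^ q) - q j x ^ (1 / 2) J_{ν+1}(j x ^ q)`.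
In its derivative the `J_{ν+1}` terms cancel because `q = r + 1 / 2`, which leaves
`(((q ν) ^ 2 - r ^ 2) / x ^ (2 - α) - (q j) ^ 2) Φ`, and `(q ν) ^ 2 - r ^ 2 = -μ`.

Since `J_ν(x) = (x / 2) ^ ν C_ν(-(x / 2) ^ 2)`, where `C_ν` is the regularized hypergeometric
function `₀F₁(; ν + 1; ·)`, the ladder relations amount to `C_ν' = C_{ν+1}` and
`C_ν(t) = (ν + 1) C_{ν+1}(t) + t C_{ν+2}(t)`, which hold coefficient by coefficient.
-/

section RegularizedHypergeometric

lemma hasSum_deriv_formalMultilinearSeries_sum {𝕜 F : Type*} [NontriviallyNormedField 𝕜]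
    [NormedAddCommGroup F] [NormedSpace 𝕜 F] [CompleteSpace F] (p : FormalMultilinearSeries 𝕜 𝕜 F)
    {z : 𝕜} (hz : ‖z‖ₑ < p.radius) :
    HasSum (fun n : ℕ => z ^ n • (n + 1) • p.coeff (n + 1)) (deriv p.sum z) := by
  have hz' : z ∈ Metric.eball 0 p.derivSeries.radius := by
    simpa using hz.trans_le p.radius_le_radius_derivSeries
  rw [(FormalMultilinearSeries.hasFDerivAt_sum hz).hasDerivAt.deriv]
  simpa [FormalMultilinearSeries.apply_eq_pow_smul_coeff,
    FormalMultilinearSeries.derivSeries_coeff_one] using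
    (p.derivSeries.hasSum hz').mapL (ContinuousLinearMap.apply 𝕜 F (1 : 𝕜))

open Complex

variable {a b : Multiset ℂ} {c z : ℂ}

lemma regularizedHGFun_eq_tsum (a b : Multiset ℂ) (z : ℂ) :
    regularizedHGFun a b z = ∑' n : ℕ, z ^ n * regularizedHGFunCoeff a b n := by
  simp [regularizedHGFun, FormalMultilinearSeries.sum]

lemma enorm_lt_radius_regularizedHGFunSeries (h : a.card ≤ b.card) (z : ℂ) :
    ‖z‖ₑ < (regularizedHGFunSeries a b).radius :=
  radius_regularizedHGFunSeries_eq_top h ▸ enorm_lt_top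

lemma hasSum_regularizedHGFun (hz : ‖z‖ₑ < (regularizedHGFunSeries a b).radius) :
    HasSum (fun n : ℕ => z ^ n * regularizedHGFunCoeff a b n) (regularizedHGFun a b z) := by
  simpa [regularizedHGFun] using (regularizedHGFunSeries a b).hasSum (x := z) (by simpa using hz)

lemma hasSum_deriv_regularizedHGFun (hz : ‖z‖ₑ < (regularizedHGFunSeries a b).radius) :
    HasSum (fun n : ℕ => z ^ n * ((n + 1) * regularizedHGFunCoeff a b (n + 1)))
      (deriv (regularizedHGFun a b) z) := by
  simpa [funext_iff, regularizedHGFun] using!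
    hasSum_deriv_formalMultilinearSeries_sum (regularizedHGFunSeries a b) hz

lemma succ_mul_regularizedHGFunCoeff_succ (a b : Multiset ℂ) (n : ℕ) :
    (n + 1) * regularizedHGFunCoeff a b (n + 1) =
      a.prod * regularizedHGFunCoeff (a.map (· + 1)) (b.map (· + 1)) n := by
  have hn : (n : ℂ) + 1 ≠ 0 := n.cast_add_one_ne_zero
  have hΓ (d : ℂ) : d + (n + 1) = d + 1 + n := by ring
  simp only [regularizedHGFunCoeff, ascPochhammer_succ_left, Polynomial.eval_mul,
    Polynomial.eval_X, Polynomial.eval_comp, Polynomial.eval_add, Polynomial.eval_one,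
    Multiset.prod_map_mul, Multiset.map_map, Function.comp_apply, Multiset.map_id',
    Nat.factorial_succ, Nat.cast_mul, Nat.cast_succ, hΓ]
  rw [mul_assoc, mul_div_assoc', mul_div_mul_left _ _ hn, mul_div_assoc]

lemma hasDerivAt_regularizedHGFun (hz : ‖z‖ₑ < (regularizedHGFunSeries a b).radius) :
    HasDerivAt (regularizedHGFun a b)
      (a.prod * regularizedHGFun (a.map (· + 1)) (b.map (· + 1)) z) z := by
  have hderiv : deriv (regularizedHGFun a b) z =
      a.prod * regularizedHGFun (a.map (· + 1)) (b.map (· + 1)) z := by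
    rw [← (hasSum_deriv_regularizedHGFun hz).tsum_eq, regularizedHGFun_eq_tsum, ← tsum_mul_left]
    refine tsum_congr fun n => ?_
    rw [succ_mul_regularizedHGFunCoeff_succ, mul_left_comm]
  rw [← hderiv]
  exact (FormalMultilinearSeries.hasFDerivAt_sum hz).differentiableAt.hasDerivAt

lemma regularizedHGFunCoeff_cons (a b : Multiset ℂ) (c : ℂ) (n : ℕ) :
    regularizedHGFunCoeff a (c ::ₘ b) n =
      (c + n) * regularizedHGFunCoeff a ((c + 1) ::ₘ b) n := by
  simp only [regularizedHGFunCoeff, Multiset.map_cons, Multiset.prod_cons, div_eq_mul_inv, mul_inv,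
    one_div_Gamma_eq_self_mul_one_div_Gamma_add_one (c + n), add_right_comm c 1 (n : ℂ)]
  ring

lemma regularizedHGFun_cons (hz : ‖z‖ₑ < (regularizedHGFunSeries a ((c + 1) ::ₘ b)).radius) :
    regularizedHGFun a (c ::ₘ b) z =
      c * regularizedHGFun a ((c + 1) ::ₘ b) z +
        z * deriv (regularizedHGFun a ((c + 1) ::ₘ b)) z := by
  have heuler : HasSum (fun n : ℕ => z ^ n * (n * regularizedHGFunCoeff a ((c + 1) ::ₘ b) n))
      (z * deriv (regularizedHGFun a ((c + 1) ::ₘ b)) z) := by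
    rw [← hasSum_nat_add_iff' 1]
    simpa [pow_succ', mul_assoc] using (hasSum_deriv_regularizedHGFun hz).mul_left z
  rw [regularizedHGFun_eq_tsum, ← (((hasSum_regularizedHGFun hz).mul_left c).add heuler).tsum_eq]
  refine tsum_congr fun n => ?_
  rw [regularizedHGFunCoeff_cons]
  ring

end RegularizedHypergeometric

section BesselClifford

/-- The Bessel–Clifford function `C_ν(t) = ∑ tⁿ / (n! Γ(n + ν + 1))`, the entire function with
`J_ν(x) = (x / 2) ^ ν * C_ν(-(x / 2) ^ 2)`. When `ν` is a negative integer, the values `Γ(-k) = 0`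
and `1 / 0 = 0` make the first terms vanish, in agreement with the entire function `1 / Γ`. -/
noncomputable def besselClifford (ν t : ℝ) : ℝ :=
  ∑' n : ℕ, t ^ n / (n.factorial * Real.Gamma (n + ν + 1))

lemma ofReal_besselClifford (ν t : ℝ) :
    (besselClifford ν t : ℂ) = Complex.regularizedHGFun 0 {((ν + 1 : ℝ) : ℂ)} t := by
  rw [besselClifford, regularizedHGFun_eq_tsum, Complex.ofReal_tsum]
  refine tsum_congr fun n => ?_
  have hΓ : ((ν + 1 : ℝ) : ℂ) + n = ((n + ν + 1 : ℝ) : ℂ) := by push_cast; ring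
  simp only [Complex.regularizedHGFunCoeff, Multiset.map_zero, Multiset.prod_zero,
    Multiset.map_singleton, Multiset.prod_singleton, hΓ, Complex.Gamma_ofReal]
  push_cast
  rw [mul_one_div]

lemma hasDerivAt_besselClifford (ν t : ℝ) :
    HasDerivAt (besselClifford ν) (besselClifford (ν + 1) t) t := by
  have hz : ‖(t : ℂ)‖ₑ < (Complex.regularizedHGFunSeries 0 {((ν + 1 : ℝ) : ℂ)}).radius :=
    enorm_lt_radius_regularizedHGFunSeries (by simp) t
  have h := (hasDerivAt_regularizedHGFun hz).real_of_complex
  simpa only [Multiset.prod_zero, one_mul, Multiset.map_zero, Multiset.map_singleton,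
    ← Complex.ofReal_one, ← Complex.ofReal_add, ← Complex.ofReal_mul, ← ofReal_besselClifford,
    Complex.ofReal_re] using h

lemma besselClifford_eq_add (ν t : ℝ) :
    besselClifford ν t =
      (ν + 1) * besselClifford (ν + 1) t + t * besselClifford (ν + 2) t := by
  have hz : ‖(t : ℂ)‖ₑ < (Complex.regularizedHGFunSeries 0 {((ν + 1 : ℝ) : ℂ) + 1}).radius :=
    enorm_lt_radius_regularizedHGFunSeries (by simp) t
  have h := regularizedHGFun_cons (b := 0) hz
  rw [Multiset.cons_zero, Multiset.cons_zero, (hasDerivAt_regularizedHGFun hz).deriv,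
    Multiset.prod_zero, one_mul, Multiset.map_zero, Multiset.map_singleton] at h
  simp only [← Complex.ofReal_one, ← Complex.ofReal_add, ← ofReal_besselClifford] at h
  rw [add_assoc ν 1 1, one_add_one_eq_two] at h
  exact_mod_cast h

end BesselClifford

section BesselJ

variable {x : ℝ}

lemma besselJ_eq_rpow_mul_besselClifford (ν : ℝ) (hx : 0 < x) :
    besselJ ν x = (x / 2) ^ ν * besselClifford ν (-(x / 2) ^ 2) := by
  rw [besselJ, besselClifford, ← tsum_mul_left]
  refine tsum_congr fun m => ?_
  rw [Real.rpow_add (by positivity), Real.rpow_mul (by positivity), Real.rpow_natCast,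
    Real.rpow_two, neg_pow ((x / 2) ^ 2)]
  ring

lemma besselJ_add_besselJ_add_two (ν : ℝ) (hx : 0 < x) :
    besselJ ν x + besselJ (ν + 2) x = 2 * (ν + 1) / x * besselJ (ν + 1) x := by
  have hx2 : 0 < x / 2 := by positivity
  simp only [besselJ_eq_rpow_mul_besselClifford _ hx, Real.rpow_add hx2, Real.rpow_one,
    Real.rpow_two, besselClifford_eq_add ν]
  field_simp
  ring

lemma hasDerivAt_besselJ (ν : ℝ) (hx : 0 < x) :
    HasDerivAt (besselJ ν) (ν / x * besselJ ν x - besselJ (ν + 1) x) x := by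
  have hx2 : 0 < x / 2 := by positivity
  have hhalf : HasDerivAt (fun y : ℝ => y / 2) (1 / 2) x := (hasDerivAt_id x).div_const 2
  have harg : HasDerivAt (fun y : ℝ => -(y / 2) ^ 2) (-(x / 2)) x :=
    (hhalf.fun_pow 2).fun_neg.congr_deriv (by ring)
  refine (((hhalf.rpow_const (p := ν) (.inl hx2.ne')).mul
    ((hasDerivAt_besselClifford ν _).comp x harg)).congr_of_eventuallyEq ?_).congr_deriv ?_
  · filter_upwards [lt_mem_nhds hx] with y hy using besselJ_eq_rpow_mul_besselClifford ν hy
  · simp only [besselJ_eq_rpow_mul_besselClifford _ hx, Real.rpow_add hx2, Real.rpow_sub hx2,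
      Real.rpow_one, Function.comp_apply]
    field_simp
    ring

lemma hasDerivAt_besselJ_add_one (ν : ℝ) (hx : 0 < x) :
    HasDerivAt (besselJ (ν + 1)) (besselJ ν x - (ν + 1) / x * besselJ (ν + 1) x) x := by
  refine (hasDerivAt_besselJ (ν + 1) hx).congr_deriv ?_
  rw [add_assoc ν 1 1, one_add_one_eq_two]
  linear_combination -besselJ_add_besselJ_add_two ν hx

lemma hasDerivAt_mul_rpow_const (j q : ℝ) (hx : 0 < x) :
    HasDerivAt (fun y : ℝ => j * y ^ q) (q / x * (j * x ^ q)) x := by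
  refine ((Real.hasDerivAt_rpow_const (.inl hx.ne')).const_mul j).congr_deriv ?_
  rw [Real.rpow_sub_one hx.ne']
  ring

variable {j : ℝ}

lemma hasDerivAt_rpow_mul_besselJ (r q ν : ℝ) (hj : 0 < j) (hx : 0 < x) :
    HasDerivAt (fun y => y ^ r * besselJ ν (j * y ^ q))
      ((r + q * ν) * (x ^ (r - 1) * besselJ ν (j * x ^ q)) -
        q * j * (x ^ (r + q - 1) * besselJ (ν + 1) (j * x ^ q))) x := by
  have hy : 0 < j * x ^ q := by positivity
  refine ((Real.hasDerivAt_rpow_const (.inl hx.ne')).mul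
    ((hasDerivAt_besselJ ν hy).comp x (hasDerivAt_mul_rpow_const j q hx))).congr_deriv ?_
  simp only [Real.rpow_sub_one hx.ne', Real.rpow_add hx, Function.comp_apply]
  field_simp
  ring

lemma hasDerivAt_rpow_mul_besselJ_add_one (r q ν : ℝ) (hj : 0 < j) (hx : 0 < x) :
    HasDerivAt (fun y => y ^ r * besselJ (ν + 1) (j * y ^ q))
      ((r - q * (ν + 1)) * (x ^ (r - 1) * besselJ (ν + 1) (j * x ^ q)) +
        q * j * (x ^ (r + q - 1) * besselJ ν (j * x ^ q))) x := by
  have hy : 0 < j * x ^ q := by positivity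
  refine ((Real.hasDerivAt_rpow_const (.inl hx.ne')).mul
    ((hasDerivAt_besselJ_add_one ν hy).comp x (hasDerivAt_mul_rpow_const j q hx))).congr_deriv ?_
  simp only [Real.rpow_sub_one hx.ne', Real.rpow_add hx, Function.comp_apply]
  field_simp
  ring

lemma deriv_rpow_mul_besselJ (r q ν : ℝ) (hj : 0 < j) (hx : 0 < x) :
    deriv (fun y => y ^ r * besselJ ν (j * y ^ q)) x =
      (r + q * ν) * (x ^ (r - 1) * besselJ ν (j * x ^ q)) -
        q * j * (x ^ (r + q - 1) * besselJ (ν + 1) (j * x ^ q)) :=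
  (hasDerivAt_rpow_mul_besselJ r q ν hj hx).deriv

lemma differentiableAt_deriv_rpow_mul_besselJ (r q ν : ℝ) (hj : 0 < j) (hx : 0 < x) :
    DifferentiableAt ℝ (deriv fun y => y ^ r * besselJ ν (j * y ^ q)) x := by
  have h := ((hasDerivAt_rpow_mul_besselJ (r - 1) q ν hj hx).const_mul (r + q * ν)).sub
    ((hasDerivAt_rpow_mul_besselJ (r + q - 1) q (ν + 1) hj hx).const_mul (q * j))
  refine (h.congr_of_eventuallyEq ?_).differentiableAt
  filter_upwards [lt_mem_nhds hx] with y hy using deriv_rpow_mul_besselJ r q ν hj hy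

lemma rpow_mul_deriv_rpow_mul_besselJ (α ν : ℝ) (hj : 0 < j) (hx : 0 < x) :
    x ^ α * deriv (fun y => y ^ ((1 - α) / 2) * besselJ ν (j * y ^ ((2 - α) / 2))) x =
      ((1 - α) / 2 + (2 - α) / 2 * ν) *
          (x ^ (-((1 - α) / 2)) * besselJ ν (j * x ^ ((2 - α) / 2))) -
        (2 - α) / 2 * j * (x ^ (1 / 2 : ℝ) * besselJ (ν + 1) (j * x ^ ((2 - α) / 2))) := by
  have hsing : x ^ (-((1 - α) / 2)) = x ^ α * x ^ ((1 - α) / 2 - 1) := by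
    rw [← Real.rpow_add hx]; ring_nf
  have hreg : x ^ (1 / 2 : ℝ) = x ^ α * x ^ ((1 - α) / 2 + (2 - α) / 2 - 1) := by
    rw [← Real.rpow_add hx]; ring_nf
  rw [deriv_rpow_mul_besselJ _ _ ν hj hx, hsing, hreg]
  ring

lemma hasDerivAt_rpow_mul_deriv_rpow_mul_besselJ (α ν : ℝ) (hj : 0 < j) (hx : 0 < x) :
    HasDerivAt
      (fun y => y ^ α * deriv (fun t => t ^ ((1 - α) / 2) * besselJ ν (j * t ^ ((2 - α) / 2))) y)
      (((((2 - α) / 2 * ν) ^ 2 - ((1 - α) / 2) ^ 2) / x ^ (2 - α) - ((2 - α) / 2 * j) ^ 2) *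
        (x ^ ((1 - α) / 2) * besselJ ν (j * x ^ ((2 - α) / 2)))) x := by
  have hflux := ((hasDerivAt_rpow_mul_besselJ (-((1 - α) / 2)) ((2 - α) / 2) ν hj hx).const_mul
      ((1 - α) / 2 + (2 - α) / 2 * ν)).sub
    ((hasDerivAt_rpow_mul_besselJ_add_one (1 / 2) ((2 - α) / 2) ν hj hx).const_mul
      ((2 - α) / 2 * j))
  refine (hflux.congr_of_eventuallyEq ?_).congr_deriv ?_
  · filter_upwards [lt_mem_nhds hx] with y hy using rpow_mul_deriv_rpow_mul_besselJ α ν hj hy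
  · have hsing : x ^ (-((1 - α) / 2) - 1) = x ^ ((1 - α) / 2) / x ^ (2 - α) := by
      rw [← Real.rpow_sub hx]; ring_nf
    have hcross : x ^ (-((1 - α) / 2) + (2 - α) / 2 - 1) = x ^ (1 / 2 - 1 : ℝ) := by ring_nf
    have hreg : x ^ (1 / 2 + (2 - α) / 2 - 1) = x ^ ((1 - α) / 2) := by ring_nf
    rw [hsing, hcross, hreg]
    ring

end BesselJ

theorem eigenfunction_equation_general (α μ ν j : ℝ)
    (hν : ((2 - α) / 2 * ν) ^ 2 = (1 - α) ^ 2 / 4 - μ) (hj : 0 < j) (Φ : ℝ → ℝ)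
    (hΦ : ∀ x, Φ x = x ^ ((1 - α) / 2) * besselJ ν (j * x ^ ((2 - α) / 2))) :
    (∀ x ∈ Set.Ioi (0 : ℝ), DifferentiableAt ℝ Φ x) ∧
    (∀ x ∈ Set.Ioi (0 : ℝ), DifferentiableAt ℝ (deriv Φ) x) ∧
    (∀ x ∈ Set.Ioi (0 : ℝ), DifferentiableAt ℝ (fun y => y ^ α * deriv Φ y) x) ∧
    (∀ x ∈ Set.Ioi (0 : ℝ),
      -deriv (fun y => y ^ α * deriv Φ y) x - μ / x ^ (2 - α) * Φ x =
        ((2 - α) / 2) ^ 2 * j ^ 2 * Φ x) := by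
  obtain rfl : Φ = fun x => x ^ ((1 - α) / 2) * besselJ ν (j * x ^ ((2 - α) / 2)) := funext hΦ
  refine ⟨fun x hx => (hasDerivAt_rpow_mul_besselJ _ _ ν hj hx).differentiableAt,
    fun x hx => differentiableAt_deriv_rpow_mul_besselJ _ _ ν hj hx,
    fun x hx => (hasDerivAt_rpow_mul_deriv_rpow_mul_besselJ α ν hj hx).differentiableAt,
    fun x hx => ?_⟩
  rw [(hasDerivAt_rpow_mul_deriv_rpow_mul_besselJ α ν hj hx).deriv, hν]
  ring

/-- For `0 ≤ α < 1`, `μ ≤ (1-α)²/4`, `ν = (2/(2-α))√((1-α)²/4 - μ)` and `j > 0`,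
the function `Φ(x) = x^((1-α)/2) J_ν(j x^((2-α)/2))` is twice differentiable on `(0,1)`,
`x ↦ x^α Φ'(x)` is differentiable on `(0,1)`, and
`-(x^α Φ')' - (μ/x^(2-α)) Φ = ((2-α)/2)² j² Φ` on `(0,1)`. -/
theorem eigenfunction_equation (α μ ν j : ℝ) (hα0 : 0 ≤ α) (hα1 : α < 1)
    (hμ : μ ≤ (1 - α) ^ 2 / 4)
    (hν : ν = 2 / (2 - α) * Real.sqrt ((1 - α) ^ 2 / 4 - μ))
    (hj : 0 < j)
    (Φ : ℝ → ℝ)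
    (hΦ : ∀ x, Φ x = x ^ ((1 - α) / 2) * besselJ ν (j * x ^ ((2 - α) / 2))) :
    (∀ x ∈ Set.Ioo (0 : ℝ) 1, DifferentiableAt ℝ Φ x) ∧
    (∀ x ∈ Set.Ioo (0 : ℝ) 1, DifferentiableAt ℝ (deriv Φ) x) ∧
    (∀ x ∈ Set.Ioo (0 : ℝ) 1, DifferentiableAt ℝ (fun y => y ^ α * deriv Φ y) x) ∧
    (∀ x ∈ Set.Ioo (0 : ℝ) 1,
      -deriv (fun y => y ^ α * deriv Φ y) x - μ / x ^ (2 - α) * Φ x =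
        ((2 - α) / 2) ^ 2 * j ^ 2 * Φ x) := by
  have hν2 : ((2 - α) / 2 * ν) ^ 2 = (1 - α) ^ 2 / 4 - μ := by
    have hα2 : 2 - α ≠ 0 := by linarith
    rw [hν, ← mul_assoc, div_mul_div_cancel₀ two_ne_zero, div_self hα2, one_mul,
      Real.sq_sqrt (sub_nonneg.2 hμ)]
  obtain ⟨hΦ', hΦ'', hflux, heq⟩ := eigenfunction_equation_general α μ ν j hν2 hj Φ hΦ
  exact ⟨fun x hx => hΦ' x hx.1, fun x hx => hΦ'' x hx.1, fun x hx => hflux x hx.1,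
    fun x hx => heq x hx.1⟩
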